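/- For every a > 0 and b ∈ (0,1), the map F_{a,b} preserves the open triangle below the diagonal: if (x,y) ∈ [0,1]² with x > y and F_{a,b}(x,y) = (x̂, ŷ), then x̂ > ŷ. -/

import Mathlib

/-- The two-dimensional map `F_{a,b}`. -/
noncomputable def chaosMap2 (a b : ℝ) : ℝ × ℝ → ℝ × ℝ :=
  fun p => (p.1 / (p.1 + (1 - p.1) * Real.exp (a * (p.2 - b))),
            p.2 / (p.2 + (1 - p.2) * Real.exp (a * (p.1 - b))))

/-- For every `a > 0` and `b ∈ (0,1)`, the map `F_{a,b}` preserves the open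
triangle below the diagonal: if `x > y` then `x̂ > ŷ`. -/
theorem stmt_17 (a b : ℝ) (ha : 0 < a) (hb : b ∈ Set.Ioo (0 : ℝ) 1)
    (x y : ℝ) (hx : x ∈ Set.Icc (0 : ℝ) 1) (hy : y ∈ Set.Icc (0 : ℝ) 1)
    (hxy : y < x) :
    (chaosMap2 a b (x, y)).2 < (chaosMap2 a b (x, y)).1 := by
  obtain ⟨hx0, hx1⟩ := hx
  obtain ⟨hy0, hy1⟩ := hy
  have hE : Real.exp (a * (y - b)) < Real.exp (a * (x - b)) :=
    Real.exp_lt_exp.mpr (mul_lt_mul_of_pos_left (by linarith) ha)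
  have hE₁ := Real.exp_pos (a * (y - b))
  have hE₂ := Real.exp_pos (a * (x - b))
  have hxpos : 0 < x := by linarith
  have hypos : 0 < 1 - y := by linarith
  have hdx : 0 < x + (1 - x) * Real.exp (a * (y - b)) :=
    add_pos_of_pos_of_nonneg hxpos (mul_nonneg (by linarith) hE₁.le)
  have hdy : 0 < y + (1 - y) * Real.exp (a * (x - b)) :=
    add_pos_of_nonneg_of_pos hy0 (mul_pos hypos hE₂)
  have hcross : y * (1 - x) * Real.exp (a * (y - b)) <
      x * (1 - y) * Real.exp (a * (x - b)) :=
    mul_lt_mul (by linarith) hE.le hE₁ (mul_pos hxpos hypos).le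
  simp only [chaosMap2]
  rw [div_lt_div_iff₀ hdy hdx]
  linarith
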